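/- Let A, B ∈ V_{(0,b]}(X) with constants M_A, M_B, and assume that the operator A − B commutes with R(t,B) for every t ∈ (0,b]. Then for every x ∈ X with ‖x‖ = 1, ‖(f(A) − f(B))x‖ ≤ −(M_A + M_B + M_A·M_B) · f(−‖(A−B)x‖), where for s ≥ 0 one has f(−s) = ∫₀^b (−s)/(t+s) dτ(t) ≤ 0. -/

import Mathlib

open MeasureTheory Set Filter

/-- A bounded operator `A` belongs to `V_{(0,b]}(X)` with constant `M` if every `t ∈ (0,b]`
lies in the resolvent set of `A` and `‖R(t,A)‖ ≤ M/t`. -/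
def MemV {X : Type*} [NormedAddCommGroup X] [NormedSpace ℂ X]
    (b M : ℝ) (A : X →L[ℂ] X) : Prop :=
  ∀ t ∈ Ioc (0 : ℝ) b, (t : ℂ) ∈ resolventSet ℂ A ∧ ‖resolvent A (t : ℂ)‖ ≤ M / t

/-- For `f ∈ ZR(0,b]` with representing measure `τ`, the operator
`f(A) = ∫₀^b A·R(t,A) dτ(t)` (a Bochner integral in operator norm). -/
noncomputable def fOp {X : Type*} [NormedAddCommGroup X] [NormedSpace ℂ X] [CompleteSpace X]
    (τ : Measure ℝ) (b : ℝ) (A : X →L[ℂ] X) : X →L[ℂ] X :=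
  ∫ t in Ioc (0 : ℝ) b, A * resolvent A (t : ℂ) ∂τ

theorem resolvent_aux {X : Type*} [NormedAddCommGroup X] [NormedSpace ℂ X]
    (A : X →L[ℂ] X) (t : ℂ) (h : t ∈ resolventSet ℂ A) :
    (algebraMap ℂ (X →L[ℂ] X) t - A) * resolvent A t = 1 ∧
    resolvent A t * (algebraMap ℂ (X →L[ℂ] X) t - A) = 1 :=
  ⟨Ring.mul_inverse_cancel _ h, Ring.inverse_mul_cancel _ h⟩

theorem mul_resolvent_aux {X : Type*} [NormedAddCommGroup X] [NormedSpace ℂ X]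
    (A : X →L[ℂ] X) (t : ℂ) (h : t ∈ resolventSet ℂ A) :
    A * resolvent A t = t • resolvent A t - 1 := by
  have h1 := (resolvent_aux A t h).1
  rw [sub_mul, ← Algebra.smul_def] at h1
  rw [← h1]; abel

theorem integrable_aux {X : Type*} [NormedAddCommGroup X] [NormedSpace ℂ X]
    [CompleteSpace X] (b : ℝ) (τ : Measure ℝ) [IsFiniteMeasure τ] (M : ℝ)
    (A : X →L[ℂ] X) (hA : MemV b M A) :
    IntegrableOn (fun t : ℝ => A * resolvent A (t : ℂ)) (Ioc 0 b) τ := by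
  have hc : ContinuousOn (fun t : ℝ => A * resolvent A (t : ℂ)) (Ioc 0 b) := by
    intro t ht
    apply ContinuousAt.continuousWithinAt
    refine continuousAt_const.mul ?_
    obtain ⟨u, hu⟩ := (hA t ht).1
    have h1 := NormedRing.inverse_continuousAt u
    rw [hu] at h1
    have h2 : ContinuousAt (fun t : ℝ => algebraMap ℂ (X →L[ℂ] X) (t : ℂ) - A) t := by
      refine ContinuousAt.sub ?_ continuousAt_const
      exact ((continuous_algebraMap ℂ (X →L[ℂ] X)).comp Complex.continuous_ofReal).continuousAt
    exact ContinuousAt.comp (f := fun t : ℝ => algebraMap ℂ (X →L[ℂ] X) (t : ℂ) - A) h1 h2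
  refine Integrable.of_bound ?_ (M + 1) ?_
  · exact hc.aestronglyMeasurable measurableSet_Ioc
  · refine (ae_restrict_iff' measurableSet_Ioc).2 (Eventually.of_forall fun t ht => ?_)
    rw [mul_resolvent_aux A _ (hA t ht).1]
    refine (norm_sub_le _ _).trans (add_le_add ?_ ContinuousLinearMap.norm_id_le)
    rw [norm_smul, Complex.norm_real, Real.norm_of_nonneg ht.1.le]
    calc t * _ ≤ t * (M / t) := mul_le_mul_of_nonneg_left (hA t ht).2 ht.1.le
      _ = M := by field_simp [ht.1.ne']

theorem pointwise_aux {X : Type*} [NormedAddCommGroup X] [NormedSpace ℂ X]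
    (b : ℝ) (MA MB : ℝ) (hMA : 0 < MA)
    (A B : X →L[ℂ] X) (hA : MemV b MA A) (hB : MemV b MB B)
    (t : ℝ) (ht : t ∈ Ioc (0 : ℝ) b)
    (hcomm : (A - B) * resolvent B (t : ℂ) = resolvent B (t : ℂ) * (A - B))
    (x : X) (hx : ‖x‖ = 1) :
    ‖(A * resolvent A (t : ℂ) - B * resolvent B (t : ℂ)) x‖ ≤
      (MA + MB + MA * MB) * (‖(A - B) x‖ / (t + ‖(A - B) x‖)) := by
  obtain ⟨hrA, hnA⟩ := hA t ht
  obtain ⟨hrB, hnB⟩ := hB t ht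
  have ht0 : 0 < t := ht.1
  have e1 : A * resolvent A (t : ℂ) - B * resolvent B (t : ℂ)
      = (t : ℂ) • (resolvent A (t : ℂ) - resolvent B (t : ℂ)) := by
    rw [mul_resolvent_aux A _ hrA, mul_resolvent_aux B _ hrB, smul_sub]; abel
  have e2 : resolvent A (t : ℂ) - resolvent B (t : ℂ)
      = resolvent A (t : ℂ) * (resolvent B (t : ℂ) * (A - B)) := by
    rw [← hcomm]
    have h1 := (resolvent_aux A _ hrA).2
    have h2 := (resolvent_aux B _ hrB).1
    generalize resolvent A (t : ℂ) = P at *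
    generalize resolvent B (t : ℂ) = Q at *
    calc P - Q = P * ((algebraMap ℂ (X →L[ℂ] X) t - B) * Q)
          - (P * (algebraMap ℂ (X →L[ℂ] X) t - A)) * Q := by rw [h1, h2, mul_one, one_mul]
      _ = _ := by noncomm_ring
  rw [e1]
  set s := ‖(A - B) x‖ with hs
  have hs0 : 0 ≤ s := norm_nonneg _
  have hN : ‖((t : ℂ) • (resolvent A (t : ℂ) - resolvent B (t : ℂ))) x‖
      = t * ‖(resolvent A (t : ℂ) - resolvent B (t : ℂ)) x‖ := by
    rw [ContinuousLinearMap.smul_apply, norm_smul, Complex.norm_real, Real.norm_of_nonneg ht0.le]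
  rw [hN]
  have b1 : ‖(resolvent A (t : ℂ) - resolvent B (t : ℂ)) x‖ ≤ MA / t + MB / t := by
    refine (ContinuousLinearMap.le_opNorm _ x).trans ?_
    rw [hx, mul_one]
    exact (norm_sub_le _ _).trans (add_le_add hnA hnB)
  have b2 : ‖(resolvent A (t : ℂ) - resolvent B (t : ℂ)) x‖ ≤ MA / t * (MB / t * s) := by
    rw [e2]
    refine (ContinuousLinearMap.le_opNorm (resolvent A (t : ℂ)) _).trans ?_
    refine mul_le_mul hnA ?_ (norm_nonneg _) (by positivity)
    refine (ContinuousLinearMap.le_opNorm (resolvent B (t : ℂ)) _).trans ?_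
    exact mul_le_mul_of_nonneg_right hnB hs0
  generalize ‖(resolvent A (t : ℂ) - resolvent B (t : ℂ)) x‖ = n at *
  rw [← mul_div_assoc, le_div_iff₀ (by positivity)]
  have c1 : t * n ≤ MA + MB := by
    calc t * n ≤ t * (MA / t + MB / t) := mul_le_mul_of_nonneg_left b1 ht0.le
      _ = _ := by field_simp
  have c2 : t * n * t ≤ MA * MB * s := by
    calc t * n * t = t * t * n := by ring
      _ ≤ t * t * (MA / t * (MB / t * s)) := mul_le_mul_of_nonneg_left b2 (by positivity)
      _ = _ := by field_simp
  nlinarith [mul_le_mul_of_nonneg_right c1 hs0]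

/-- Theorem 2: if moreover `A − B` commutes with `R(t,B)` for all `t ∈ (0,b]`, then for every
unit vector `x`, `‖(f(A) − f(B))x‖ ≤ −(M_A + M_B + M_A·M_B)·f(−‖(A−B)x‖)`. -/
theorem norm_fOp_sub_fOp_apply_le {X : Type*} [NormedAddCommGroup X] [NormedSpace ℂ X]
    [CompleteSpace X] (b : ℝ) (hb : 0 < b) (τ : Measure ℝ) [IsFiniteMeasure τ]
    (hτ : IntegrableOn (fun t : ℝ => 1 / t) (Ioc 0 b) τ)
    (MA MB : ℝ) (hMA : 0 < MA) (hMB : 0 < MB)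
    (A B : X →L[ℂ] X) (hA : MemV b MA A) (hB : MemV b MB B)
    (hcomm : ∀ t ∈ Ioc (0 : ℝ) b,
      (A - B) * resolvent B (t : ℂ) = resolvent B (t : ℂ) * (A - B)) :
    ∀ x : X, ‖x‖ = 1 →
      ‖(fOp τ b A - fOp τ b B) x‖ ≤
        -((MA + MB + MA * MB) *
          ∫ t in Ioc (0 : ℝ) b, (-‖(A - B) x‖) / (t + ‖(A - B) x‖) ∂τ) := by
  intro x hx
  have iA := integrable_aux b τ MA A hA
  have iB := integrable_aux b τ MB B hB
  have iAB : Integrable (fun t : ℝ => A * resolvent A (t : ℂ) - B * resolvent B (t : ℂ))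
      (τ.restrict (Ioc 0 b)) := iA.sub iB
  unfold fOp
  rw [← integral_sub iA iB, ← mul_neg, ← integral_neg, ← integral_const_mul,
    ContinuousLinearMap.integral_apply iAB]
  refine norm_integral_le_of_norm_le ?_ ?_
  · refine Integrable.const_mul ?_ _
    refine Measure.integrableOn_of_bounded (M := 1) (measure_ne_top _ _) ?_ ?_
    · exact Measurable.aestronglyMeasurable (by fun_prop)
    · refine (ae_restrict_iff' measurableSet_Ioc).2 (Eventually.of_forall fun t ht => ?_)
      have h0 : 0 ≤ ‖(A - B) x‖ := norm_nonneg _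
      have h1 : 0 < t := ht.1
      rw [neg_div, neg_neg, Real.norm_of_nonneg (by positivity)]
      exact div_le_one_of_le₀ (by linarith) (by positivity)
  · refine (ae_restrict_iff' measurableSet_Ioc).2 (Eventually.of_forall fun t ht => ?_)
    rw [neg_div, neg_neg]
    exact pointwise_aux b MA MB hMA A B hA hB t ht (hcomm t ht) x hx
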